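/- The preimage of a charming space under a perfect map is a charming space; that is, if f : X → Z is a perfect surjection between topological spaces and Z is a charming space, then X is a charming space. -/

import Mathlib

open Set Function TopologicalSpace

universe u

/-- A map between topological spaces is *perfect* if it is continuous, closed, and
every fiber is compact. -/
def PerfectMap {Y : Type*} {Z : Type*} [TopologicalSpace Y] [TopologicalSpace Z]
    (f : Y → Z) : Prop :=
  Continuous f ∧ IsClosedMap f ∧ ∀ z : Z, IsCompact (f ⁻¹' {z})

/-- A topological space `X` is a *Lindelöf Σ-space* if there exist a topological space `Y`,
a continuous surjection from `Y` onto `X`, and a perfect surjection from `Y` onto some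
second-countable space. -/
def IsLindelofSigma (X : Type u) [TopologicalSpace X] : Prop :=
  ∃ (Y : Type u) (tY : TopologicalSpace Y) (Z : Type u) (tZ : TopologicalSpace Z),
    @SecondCountableTopology Z tZ ∧
    (∃ f : Y → X, @Continuous Y X tY _ f ∧ Surjective f) ∧
    (∃ g : Y → Z, @PerfectMap Y Z tY tZ g ∧ Surjective g)

/-- A topological space `X` is a *charming space* if there is a subset `Y` of `X` that is a
Lindelöf Σ-space in the subspace topology and such that for every open `U ⊇ Y`,
the set `X \ U` is a Lindelöf Σ-space in the subspace topology. -/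
def IsCharming (X : Type u) [TopologicalSpace X] : Prop :=
  ∃ Y : Set X, IsLindelofSigma Y ∧
    ∀ U : Set X, IsOpen U → Y ⊆ U → IsLindelofSigma ↥(Uᶜ)

/-- A *CL-charming* space: the shell `Y` can be chosen closed. -/
def IsCLCharming (X : Type u) [TopologicalSpace X] : Prop :=
  ∃ Y : Set X, IsClosed Y ∧ IsLindelofSigma Y ∧
    ∀ U : Set X, IsOpen U → Y ⊆ U → IsLindelofSigma ↥(Uᶜ)

/-- A *CO-charming* space: the shell `Y` can be chosen compact. -/
def IsCOCharming (X : Type u) [TopologicalSpace X] : Prop :=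
  ∃ Y : Set X, IsCompact Y ∧ IsLindelofSigma Y ∧
    ∀ U : Set X, IsOpen U → Y ⊆ U → IsLindelofSigma ↥(Uᶜ)

/-- A space has a *countable network* if there is a countable family `N` of subsets such that
every point in every open set `V` is contained in a member of `N` contained in `V`. -/
def HasCountableNetwork (X : Type u) [TopologicalSpace X] : Prop :=
  ∃ N : Set (Set X), N.Countable ∧
    ∀ x : X, ∀ V : Set X, IsOpen V → x ∈ V → ∃ n ∈ N, x ∈ n ∧ n ⊆ V

/-- A topological space `X` is *weak (4,4)-structured* if there exist a topological space `Y`,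
a continuous surjection from `Y` onto `X`, and a perfect surjection from `Y` onto some
charming space. -/
def IsWeak44Structured (X : Type u) [TopologicalSpace X] : Prop :=
  ∃ (Y : Type u) (tY : TopologicalSpace Y) (M : Type u) (tM : TopologicalSpace M),
    @IsCharming M tM ∧
    (∃ f : Y → X, @Continuous Y X tY _ f ∧ Surjective f) ∧
    (∃ g : Y → M, @PerfectMap Y M tY tM g ∧ Surjective g)

/-!
If `S` is a shell of `Z`, then `f ⁻¹' S` is a shell of `X`: for open `U ⊇ f ⁻¹' S` the set
`V = kernImage f U` of points whose whole fiber lies in `U` is open because `f` is closed, it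
contains `S`, and `f` restricts to a proper map from `Uᶜ` to the Lindelöf Σ-space `Vᶜ`. The
Lindelöf Σ property lifts along a proper map `A → B`: if `B` is a continuous image of `Y` and `Y`
is proper over a second-countable `M`, then the fiber product `A ×_B Y` maps continuously onto `A`
and properly to `Y`, hence to `M`.
-/

section ProperMap

open Filter Topology

variable {A B Y : Type*} [TopologicalSpace A] [TopologicalSpace B] [TopologicalSpace Y]

theorem perfectMap_iff_isProperMap {f : A → B} : PerfectMap f ↔ IsProperMap f :=
  isProperMap_iff_isClosedMap_and_compact_fibers.symm

theorem isProperMap_codRestrict {f : A → B} (hf : IsProperMap f) {s : Set B}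
    (hs : ∀ a, f a ∈ s) : IsProperMap (codRestrict f s hs) :=
  isProperMap_of_comp_of_inj (hf.continuous.subtype_mk hs) continuous_subtype_val hf
    Subtype.val_injective

theorem isProperMap_pullback_snd {f : A → B} (hf : IsProperMap f) {h : Y → B}
    (hh : Continuous h) : IsProperMap (Pullback.snd : f.Pullback h → Y) := by
  refine isProperMap_iff_ultrafilter.2
    ⟨continuous_snd.comp continuous_subtype_val, fun 𝒰 y h𝒰y => ?_⟩
  have h𝒰fy : Tendsto f (𝒰.map Pullback.fst : Ultrafilter A) (𝓝 (h y)) :=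
    tendsto_map' (((hh.tendsto y).comp h𝒰y).congr fun p => p.2.symm)
  obtain ⟨a, hay, h𝒰a⟩ :
      ∃ a, f a = h y ∧ Tendsto Pullback.fst (𝒰 : Filter (f.Pullback h)) (𝓝 a) :=
    hf.ultrafilter_le_nhds_of_tendsto h𝒰fy
  have h𝒰id : Tendsto id (𝒰 : Filter (f.Pullback h)) (𝓝 ⟨(a, y), hay⟩) :=
    tendsto_subtype_rng.2 (h𝒰a.prodMk_nhds h𝒰y)
  exact ⟨⟨(a, y), hay⟩, rfl, h𝒰id⟩

end ProperMap

namespace IsLindelofSigma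

variable {A B Y M : Type u} [TopologicalSpace A] [TopologicalSpace B] [TopologicalSpace Y]
  [TopologicalSpace M]

theorem of_isProperMap_of_surjective [SecondCountableTopology M] {g : Y → M}
    (hg : IsProperMap g) {h : Y → A} (hh : Continuous h) (hsurj : Surjective h) :
    IsLindelofSigma A :=
  ⟨Y, inferInstance, range g, inferInstance, inferInstance, ⟨h, hh, hsurj⟩,
    rangeFactorization g, perfectMap_iff_isProperMap.2 (isProperMap_codRestrict hg mem_range_self),
    rangeFactorization_surjective⟩

theorem of_isProperMap (hB : IsLindelofSigma B) {f : A → B} (hf : IsProperMap f) :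
    IsLindelofSigma A := by
  obtain ⟨Y, _, M, _, _, ⟨h, hh, hsurj⟩, g, hg, -⟩ := hB
  have hproper : IsProperMap (g ∘ (Pullback.snd : f.Pullback h → Y)) :=
    (perfectMap_iff_isProperMap.1 hg).comp (isProperMap_pullback_snd hf hh)
  have hfst : Surjective (Pullback.fst : f.Pullback h → A) := fun a =>
    let ⟨y, hy⟩ := hsurj (f a)
    ⟨⟨(a, y), hy.symm⟩, rfl⟩
  exact of_isProperMap_of_surjective hproper (continuous_fst.comp continuous_subtype_val) hfst

end IsLindelofSigma

theorem perfect_preimage_of_charming_general {X Z : Type u} [TopologicalSpace X]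
    [TopologicalSpace Z] {f : X → Z} (hf : PerfectMap f) (hZ : IsCharming Z) :
    IsCharming X := by
  obtain ⟨S, hS, hScompl⟩ := hZ
  have hproper : IsProperMap f := perfectMap_iff_isProperMap.1 hf
  refine ⟨f ⁻¹' S, hS.of_isProperMap (hproper.restrictPreimage S), fun U hU hSU => ?_⟩
  have hV : IsOpen (kernImage f U) := isClosedMap_iff_kernImage.1 hproper.isClosedMap hU
  have hVcompl : IsLindelofSigma ↥(kernImage f U)ᶜ :=
    hScompl _ hV (subset_kernImage_iff.2 hSU)
  have hmaps : ∀ x : ↥Uᶜ, f x ∈ (kernImage f U)ᶜ := fun x hx => x.2 (hx rfl)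
  exact hVcompl.of_isProperMap
    (isProperMap_codRestrict (hproper.restrict hU.isClosed_compl) hmaps)

/-- The preimage of a charming space under a perfect surjection is a charming space. -/
theorem perfect_preimage_of_charming {X : Type u} {Z : Type u}
    [TopologicalSpace X] [T35Space X] [TopologicalSpace Z] [T35Space Z]
    (f : X → Z) (hf : PerfectMap f) (hsurj : Surjective f)
    (hZ : IsCharming Z) :
    IsCharming X :=
  perfect_preimage_of_charming_general hf hZ
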